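/- arXiv:2303.03182 — 2 statements merged into one kernel-verified Lean document; each statement's English description precedes it below -/
import Mathlib

section
/- If the active user set satisfies |A| ≤ 2, then for every cache placement vector q ∈ [0,1]^N, every demand map d on A, and every leader group U for (A, d), the D-MCCS delivery rate equals the lower-bound rate: R_MCCS(d; q) = R_lb(D; q), where D = {d_k : k ∈ A}. -/
/-!
By the binomial theorem the file in position `i` of an ordering contributes `(1 - q)ⁱ F` to the
lower bound, and when a single file is requested the D-MCCS rate is `(1 - q) F`. This settles the
single-file case for any number of users. For two users requesting distinct files `x ≠ y`, the only
group with a genuine maximum is the pair of users, and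
`(1 - q_x) F_x + (1 - q_y)² F_y = (1 - q_x)² F_x + (1 - q_y)² F_y + q_x (1 - q_x) F_x`,
so that choosing the larger of the two orderings of `{x, y}` is the same as taking that maximum.
-/

open Finset

/-- Maximum of a real-valued function over a finite set (`0` if the set is empty). -/
noncomputable def maxOver {α : Type*} (S : Finset α) (f : α → ℝ) : ℝ :=
  if h : S.Nonempty then S.sup' h f else 0

/-- The D-MCCS delivery rate: the sum, over nonempty subsets `S ⊆ A` with
`S ∩ U ≠ ∅` (the non-redundant groups), of
`max_{k ∈ S} q_{d_k}^{|S|−1} (1 − q_{d_k})^{|A|−|S|+1} F_{d_k}`. -/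
noncomputable def R_MCCS {α : Type*} [DecidableEq α] {N : ℕ} (A U : Finset α)
    (d : α → Fin N) (q F : Fin N → ℝ) : ℝ :=
  ∑ S ∈ A.powerset.filter (fun S => (S ∩ U).Nonempty),
    maxOver S (fun k =>
      q (d k) ^ (S.card - 1) * (1 - q (d k)) ^ (A.card - S.card + 1) * F (d k))

/-- The lower-bound rate: the maximum over bijections `π : {1,…,|D|} → D` of
`Σ_{s=0}^{|A|−1} Σ_{i=1}^{|D|} C(|A|−i, s) q_{π(i)}^s (1 − q_{π(i)})^{|A|−s} F_{π(i)}`,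
where `Acard = |A|`. -/
noncomputable def R_lb {N : ℕ} (Acard : ℕ) (D : Finset (Fin N))
    (q F : Fin N → ℝ) : ℝ :=
  ⨆ π : Fin D.card ≃ {x : Fin N // x ∈ D},
    ∑ s ∈ Finset.range Acard, ∑ i : Fin D.card,
      ((Acard - (i.1 + 1)).choose s : ℝ) * q (π i).1 ^ s *
        (1 - q (π i).1) ^ (Acard - s) * F (π i).1

/-- `U` is a leader group for active set `A` with demand map `d`: `U ⊆ A`, the demand
map is injective on `U`, and the users in `U` request exactly the distinct files
requested by the users in `A`. -/
def IsLeaderGroup {α : Type*} [DecidableEq α] {N : ℕ} (A U : Finset α)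
    (d : α → Fin N) : Prop :=
  U ⊆ A ∧ Set.InjOn d ↑U ∧ U.image d = A.image d

section LowerBound

lemma sum_choose_mul_pow_mul_one_sub_pow {R : Type*} [CommRing R] (p : R) {i n : ℕ} (hi : i < n) :
    ∑ s ∈ range n, ((n - (i + 1)).choose s : R) * p ^ s * (1 - p) ^ (n - s) =
      (1 - p) ^ (i + 1) := by
  obtain ⟨m, rfl⟩ := Nat.exists_eq_add_of_le' (Nat.succ_le_of_lt hi)
  calc ∑ s ∈ range (m + (i + 1)),
        ((m + (i + 1) - (i + 1)).choose s : R) * p ^ s * (1 - p) ^ (m + (i + 1) - s)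
      = ∑ s ∈ range (m + 1), (m.choose s : R) * p ^ s * (1 - p) ^ (m + (i + 1) - s) := by
        rw [Nat.add_sub_cancel]
        refine (sum_subset (range_mono (by omega)) fun s _ hs ↦ ?_).symm
        rw [Nat.choose_eq_zero_of_lt (by simpa using hs), Nat.cast_zero, zero_mul, zero_mul]
    _ = ∑ s ∈ range (m + 1), (1 - p) ^ (i + 1) * (p ^ s * (1 - p) ^ (m - s) * m.choose s) := by
        refine sum_congr rfl fun s hs ↦ ?_
        rw [show m + (i + 1) - s = m - s + (i + 1) by have := mem_range.mp hs; omega, pow_add]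
        ring
    _ = (1 - p) ^ (i + 1) := by
        rw [← mul_sum, ← add_pow, add_sub_cancel, one_pow, mul_one]

lemma iSup_equiv_fin_two {β γ : Type*} [ConditionallyCompleteLattice γ] (e : Fin 2 ≃ β)
    (f : (Fin 2 ≃ β) → γ) : ⨆ π, f π = f e ⊔ f ((Equiv.swap 0 1).trans e) := by
  have perm_fin_two : ∀ σ : Equiv.Perm (Fin 2), σ = Equiv.refl _ ∨ σ = Equiv.swap 0 1 := by decide
  have range_eq : Set.range f = {f e, f ((Equiv.swap 0 1).trans e)} := by
    refine Set.Subset.antisymm ?_ (Set.pair_subset (Set.mem_range_self _) (Set.mem_range_self _))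
    rintro _ ⟨π, rfl⟩
    obtain ⟨σ, rfl⟩ : ∃ σ : Equiv.Perm (Fin 2), π = σ.trans e :=
      ⟨π.trans e.symm, by simp [Equiv.trans_assoc]⟩
    rcases perm_fin_two σ with rfl | rfl <;> simp
  rw [iSup, range_eq, csSup_pair]

lemma exists_equiv_fin_two_pair {β : Type*} [DecidableEq β] {x y : β} (hxy : x ≠ y) :
    ∃ e : Fin 2 ≃ {z : β // z ∈ ({x, y} : Finset β)}, (e 0 : β) = x ∧ (e 1 : β) = y :=
  ⟨(List.Nodup.getEquiv [x, y] (by simpa using hxy)).trans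
    (Equiv.subtypeEquivRight fun z ↦ by simp), rfl, rfl⟩

variable {N : ℕ} (q F : Fin N → ℝ)

lemma R_lb_eq_iSup_sum_pow {n m : ℕ} {D : Finset (Fin N)} (hD : D.card = m) (hmn : m ≤ n) :
    R_lb n D q F =
      ⨆ π : Fin m ≃ {x : Fin N // x ∈ D},
        ∑ i : Fin m, (1 - q (π i)) ^ (i.1 + 1) * F (π i) := by
  subst hD
  refine iSup_congr fun π ↦ ?_
  rw [sum_comm]
  refine sum_congr rfl fun i _ ↦ ?_
  rw [← sum_mul, sum_choose_mul_pow_mul_one_sub_pow _ (i.2.trans_le hmn)]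

lemma R_lb_singleton {n : ℕ} (hn : 1 ≤ n) (x : Fin N) : R_lb n {x} q F = (1 - q x) * F x := by
  rw [R_lb_eq_iSup_sum_pow q F (card_singleton x) hn]
  have : Nonempty (Fin 1 ≃ {z : Fin N // z ∈ ({x} : Finset (Fin N))}) := ⟨Equiv.ofUnique _ _⟩
  have coe_eq (z : {z : Fin N // z ∈ ({x} : Finset (Fin N))}) : z.1 = x := mem_singleton.mp z.2
  simp [coe_eq]

lemma R_lb_pair {n : ℕ} (hn : 2 ≤ n) {x y : Fin N} (hxy : x ≠ y) :
    R_lb n {x, y} q F =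
      max ((1 - q x) * F x + (1 - q y) ^ 2 * F y) ((1 - q y) * F y + (1 - q x) ^ 2 * F x) := by
  obtain ⟨e, he0, he1⟩ := exists_equiv_fin_two_pair hxy
  rw [R_lb_eq_iSup_sum_pow q F (card_pair hxy) hn, iSup_equiv_fin_two e]
  simp [Fin.sum_univ_two, he0, he1]

end LowerBound

section DeliveryRate

variable {α : Type*}

lemma maxOver_eq_of_forall_eq {S : Finset α} {f : α → ℝ} {c : ℝ} (hS : S.Nonempty)
    (hf : ∀ k ∈ S, f k = c) : maxOver S f = c := by
  rw [maxOver, dif_pos hS, sup'_eq_of_forall hS f hf]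

lemma maxOver_singleton (a : α) (f : α → ℝ) : maxOver {a} f = f a :=
  maxOver_eq_of_forall_eq (singleton_nonempty a) (by simp)

variable [DecidableEq α]

lemma maxOver_pair (a b : α) (f : α → ℝ) : maxOver {a, b} f = max (f a) (f b) := by
  simp [maxOver, sup'_insert]

variable {N : ℕ} (d : α → Fin N) (q F : Fin N → ℝ)

lemma R_MCCS_of_forall_eq {A : Finset α} {u : α} (hu : u ∈ A) (hd : ∀ k ∈ A, d k = d u) :
    R_MCCS A {u} d q F = (1 - q (d u)) * F (d u) := by
  obtain ⟨B, huB, rfl⟩ : ∃ B, u ∉ B ∧ insert u B = A :=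
    ⟨A.erase u, notMem_erase u A, insert_erase hu⟩
  have max_eq : ∀ T ∈ B.powerset,
      maxOver (insert u T) (fun k ↦ q (d k) ^ ((insert u T).card - 1) *
          (1 - q (d k)) ^ ((insert u B).card - (insert u T).card + 1) * F (d k)) =
        q (d u) ^ T.card * (1 - q (d u)) ^ (B.card - T.card) * ((1 - q (d u)) * F (d u)) := by
    intro T hT
    have hTB : T ⊆ B := mem_powerset.mp hT
    refine maxOver_eq_of_forall_eq (insert_nonempty u T) fun k hk ↦ ?_
    rw [hd k (insert_subset_insert u hTB hk), card_insert_of_notMem huB,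
      card_insert_of_notMem (notMem_mono hTB huB), Nat.add_sub_cancel, Nat.add_sub_add_right,
      pow_succ]
    ring
  have not_leader : ∀ T ∈ B.powerset, ¬ (T ∩ {u}).Nonempty := by
    intro T hT
    rw [inter_singleton_of_notMem (notMem_mono (mem_powerset.mp hT) huB)]
    exact not_nonempty_empty
  have leader (T : Finset α) : (insert u T ∩ {u}).Nonempty := ⟨u, by simp⟩
  rw [R_MCCS, sum_filter, sum_powerset_insert huB,
    sum_eq_zero fun T hT ↦ if_neg (not_leader T hT), zero_add,
    sum_congr rfl fun T hT ↦ (if_pos (leader T)).trans (max_eq T hT), ← sum_mul,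
    sum_pow_mul_eq_add_pow, add_sub_cancel, one_pow, one_mul]

lemma R_MCCS_pair {a b : α} (hab : a ≠ b) :
    R_MCCS {a, b} {a, b} d q F =
      (1 - q (d a)) ^ 2 * F (d a) + (1 - q (d b)) ^ 2 * F (d b) +
        max (q (d a) * (1 - q (d a)) * F (d a)) (q (d b) * (1 - q (d b)) * F (d b)) := by
  have powerset_singleton : ({b} : Finset α).powerset = {∅, {b}} := by
    ext S
    simp [subset_singleton_iff]
  rw [R_MCCS, sum_filter, sum_powerset_insert (by simpa using hab), powerset_singleton,
    sum_pair (singleton_ne_empty b).symm, sum_pair (singleton_ne_empty b).symm]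
  simp only [notMem_empty, not_false_eq_true, inter_insert_of_notMem, inter_singleton_of_notMem,
    Finset.not_nonempty_empty, ↓reduceIte, mem_insert, mem_singleton, or_true,
    singleton_inter_of_mem, singleton_nonempty, inter_insert_of_mem, insert_nonempty, inter_self,
    insert_empty_eq, card_singleton, card_pair hab, tsub_self, Nat.add_one_sub_one, Nat.reduceAdd,
    pow_zero, pow_one, one_mul, zero_add, maxOver_singleton, maxOver_pair]
  ring

end DeliveryRate

section LeaderGroup

variable {α : Type*} [DecidableEq α] {N : ℕ} {A U : Finset α} {d : α → Fin N}

namespace IsLeaderGroup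

lemma card_eq (hU : IsLeaderGroup A U d) : U.card = (A.image d).card := by
  rw [← hU.2.2, card_image_of_injOn hU.2.1]

lemma eq_of_injOn (hU : IsLeaderGroup A U d) (hd : Set.InjOn d A) : U = A :=
  eq_of_subset_of_card_le hU.1 (by rw [hU.card_eq, card_image_of_injOn hd])

end IsLeaderGroup

variable (q F : Fin N → ℝ)

lemma rate_eq_lb_of_card_image_eq_one (hU : IsLeaderGroup A U d) (hD : (A.image d).card = 1) :
    R_MCCS A U d q F = R_lb A.card (A.image d) q F := by
  obtain ⟨u, rfl⟩ := card_eq_one.mp (hU.card_eq.trans hD)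
  have hu : u ∈ A := singleton_subset_iff.mp hU.1
  have image_eq : A.image d = {d u} := by rw [← hU.2.2, image_singleton]
  have hd : ∀ k ∈ A, d k = d u := fun k hk ↦
    mem_singleton.mp (image_eq ▸ mem_image_of_mem d hk)
  rw [R_MCCS_of_forall_eq d q F hu hd, image_eq, R_lb_singleton q F (card_pos.mpr ⟨u, hu⟩)]

lemma rate_eq_lb_of_card_eq_two_of_injOn (hA : A.card = 2) (hd : Set.InjOn d A) :
    R_MCCS A A d q F = R_lb A.card (A.image d) q F := by
  obtain ⟨a, b, hab, rfl⟩ := card_eq_two.mp hA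
  have hdab : d a ≠ d b := hd.ne (by simp) (by simp) hab
  rw [R_MCCS_pair d q F hab, image_insert, image_singleton, R_lb_pair q F hA.ge hdab,
    ← max_add_add_left]
  congr 1 <;> ring

theorem rate_eq_lb_of_card_le_two_general (hA : (A.image d).card ≤ 1 ∨ A.card ≤ 2)
    (hU : IsLeaderGroup A U d) :
    R_MCCS A U d q F = R_lb A.card (A.image d) q F := by
  have card_image_le_card : (A.image d).card ≤ A.card := card_image_le
  obtain hD | hD | ⟨hA2, hD⟩ : (A.image d).card = 0 ∨ (A.image d).card = 1 ∨
      A.card = 2 ∧ (A.image d).card = A.card := by omega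
  · obtain rfl : A = ∅ := image_eq_empty.mp (card_eq_zero.mp hD)
    simp [R_MCCS, R_lb, filter_singleton]
  · exact rate_eq_lb_of_card_image_eq_one q F hU hD
  · have hd : Set.InjOn d A := card_image_iff.mp hD
    rw [hU.eq_of_injOn hd]
    exact rate_eq_lb_of_card_eq_two_of_injOn q F hA2 hd

end LeaderGroup

/-- If the active user set satisfies `|A| ≤ 2`, then for every cache placement vector
`q ∈ [0,1]^N`, every demand map `d`, and every leader group `U` for `(A, d)`, the
D-MCCS delivery rate equals the lower-bound rate with `D = {d_k : k ∈ A}`. -/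
theorem rate_eq_lb_of_card_le_two {α : Type*} [DecidableEq α] {N : ℕ}
    (A U : Finset α) (d : α → Fin N) (q F : Fin N → ℝ)
    (hA : A.card ≤ 2) (hq : ∀ n, q n ∈ Set.Icc (0 : ℝ) 1) (hF : ∀ n, 0 ≤ F n)
    (hU : IsLeaderGroup A U d) :
    R_MCCS A U d q F = R_lb A.card (A.image d) q F :=
  rate_eq_lb_of_card_le_two_general q F (Or.inr hA) hU
end

section
/- For every cache placement vector q ∈ [0,1]^N, every collection of file sizes F_n ≥ 0, every finite active set A with demand map d, and every leader group U for (A, d), the D-MCCS delivery rate is at least the lower-bound rate: R_MCCS(d; q) ≥ R_lb(D; q), where D = {d_k : k ∈ A}. -/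
/-!
Fix a bijection `π` and enumerate the leaders as `u i`, where `d (u i) = π i`. A set `S ⊆ A` that
meets `U` has a least index `i` with `u i ∈ S`, and then `S = insert (u i) T` for a unique `T`
avoiding `u j` for all `j ≤ i`. Hence the sum over the non-redundant groups splits exactly into
sums over `i` and over `T ⊆ A \ {u j : j ≤ i}`. Replacing each maximum over `S` by its value at
the leader `u i`, and counting the sets `T` by cardinality, yields the sum belonging to `π`.
-/

open Finset

lemma le_maxOver {α : Type*} {S : Finset α} (f : α → ℝ) {k : α} (hk : k ∈ S) :
    f k ≤ maxOver S f := by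
  rw [maxOver, dif_pos ⟨k, hk⟩]
  exact le_sup' f hk

lemma sum_powerset_apply_card_of_card_lt {α M : Type*} [AddCommMonoid M] (g : ℕ → M)
    {s : Finset α} {n : ℕ} (hn : #s < n) :
    ∑ T ∈ s.powerset, g #T = ∑ k ∈ range n, (#s).choose k • g k := by
  rw [sum_powerset_apply_card]
  refine sum_subset (range_subset_range.2 hn) fun k _ hk => ?_
  rw [Nat.choose_eq_zero_of_lt (by simpa [Nat.lt_succ_iff] using hk), zero_nsmul]

lemma exists_injective_enumeration_of_injOn {α β ι : Type*} [DecidableEq α] [DecidableEq β]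
    [Fintype ι] {U : Finset α} {D : Finset β} {d : α → β} (hd : Set.InjOn d U)
    (hUD : U.image d = D) (π : ι ≃ {x // x ∈ D}) :
    ∃ u : ι → α, Function.Injective u ∧ univ.image u = U ∧ ∀ i, d (u i) = π i := by
  have hlift : ∀ i, ∃ k ∈ U, d k = π i := fun i => mem_image.1 (hUD.ge (π i).2)
  choose u huU hdu using hlift
  refine ⟨u, fun i j hij => π.injective (Subtype.ext ?_), Subset.antisymm ?_ fun k hk => ?_, hdu⟩
  · rw [← hdu, ← hdu, hij]
  · exact image_subset_iff.2 fun i _ => huU i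
  · let i := π.symm ⟨d k, hUD.le (mem_image_of_mem d hk)⟩
    have hdi : d (u i) = d k := by simp [i, hdu]
    exact mem_image.2 ⟨i, mem_univ i, hd (huU i) hk hdi⟩

section TailSet

variable {α ι : Type*} [DecidableEq α]

/-- The elements of `A` that do not occur among the `u j` with `j ≤ i`. Adding `u i` to a subset of
it gives a subset of `A` in which `i` is the least index of an enumerated element. -/
def tailSet [Preorder ι] [LocallyFiniteOrderBot ι] (A : Finset α) (u : ι → α) (i : ι) :
    Finset α :=
  A \ (Iic i).image u

lemma subset_tailSet_iff [Preorder ι] [LocallyFiniteOrderBot ι] {A T : Finset α} {u : ι → α}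
    {i : ι} : T ⊆ tailSet A u i ↔ T ⊆ A ∧ ∀ j ≤ i, u j ∉ T := by
  simp [tailSet, subset_sdiff, disjoint_right]

lemma card_tailSet {A : Finset α} {m : ℕ} {u : Fin m → α} (hu : Function.Injective u)
    (huA : ∀ i, u i ∈ A) (i : Fin m) : #(tailSet A u i) = #A - (i + 1) := by
  have hsub : (Iic i).image u ⊆ A := image_subset_iff.2 fun j _ => huA j
  rw [tailSet, card_sdiff_of_subset hsub, card_image_of_injective _ hu, Fin.card_Iic]

lemma sum_powerset_tailSet_apply_card_insert {M : Type*} [AddCommMonoid M] (g : ℕ → M)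
    {A : Finset α} {m : ℕ} {u : Fin m → α} (hu : Function.Injective u) (huA : ∀ i, u i ∈ A)
    (i : Fin m) :
    ∑ T ∈ (tailSet A u i).powerset, g #(insert (u i) T) =
      ∑ s ∈ range #A, (#A - (i + 1)).choose s • g (s + 1) := by
  have hpos : 0 < #A := card_pos.2 ⟨u i, huA i⟩
  have hlt : #(tailSet A u i) < #A := by
    rw [card_tailSet hu huA]
    omega
  rw [← card_tailSet hu huA, ← sum_powerset_apply_card_of_card_lt (fun s => g (s + 1)) hlt]
  refine sum_congr rfl fun T hT => ?_
  rw [card_insert_of_notMem ((subset_tailSet_iff.1 (mem_powerset.1 hT)).2 i le_rfl)]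

variable [LinearOrder ι] [LocallyFiniteOrderBot ι] {A : Finset α} {u : ι → α}

lemma le_of_mem_insert_of_subset_tailSet (hu : Function.Injective u) {T : Finset α} {i j : ι}
    (hT : T ⊆ tailSet A u i) (hj : u j ∈ insert (u i) T) : i ≤ j := by
  rcases mem_insert.1 hj with hji | hjT
  · exact (hu hji).ge
  · exact le_of_not_ge fun hji => (subset_tailSet_iff.1 hT).2 j hji hjT

lemma injOn_insert_powerset_tailSet [Fintype ι] (hu : Function.Injective u) :
    Set.InjOn (fun x : (_ : ι) × Finset α => insert (u x.1) x.2)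
      (univ.sigma fun i => (tailSet A u i).powerset) := by
  rintro ⟨i, T⟩ hT ⟨j, T'⟩ hT' hins
  replace hT : T ⊆ tailSet A u i := by simpa using hT
  replace hT' : T' ⊆ tailSet A u j := by simpa using hT'
  replace hins : insert (u i) T = insert (u j) T' := hins
  obtain rfl : i = j := le_antisymm
    (le_of_mem_insert_of_subset_tailSet hu hT (hins ▸ mem_insert_self _ _))
    (le_of_mem_insert_of_subset_tailSet hu hT' (hins ▸ mem_insert_self _ _))
  have hiT : u i ∉ T := (subset_tailSet_iff.1 hT).2 i le_rfl
  have hiT' : u i ∉ T' := (subset_tailSet_iff.1 hT').2 i le_rfl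
  rw [← erase_insert hiT, hins, erase_insert hiT']

lemma exists_insert_eq_of_inter_image_nonempty [Fintype ι] {S : Finset α} (hSA : S ⊆ A)
    (hS : (S ∩ univ.image u).Nonempty) : ∃ i, ∃ T ⊆ tailSet A u i, insert (u i) T = S := by
  have hne : ({i | u i ∈ S} : Finset ι).Nonempty := by
    obtain ⟨k, hk⟩ := hS
    obtain ⟨hkS, hku⟩ := mem_inter.1 hk
    obtain ⟨i, -, rfl⟩ := mem_image.1 hku
    exact ⟨i, by simpa using hkS⟩
  obtain ⟨i, hi, hmin⟩ := exists_min_image _ id hne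
  simp only [mem_filter, mem_univ, true_and, id] at hi hmin
  refine ⟨i, S.erase (u i), subset_tailSet_iff.2 ⟨(erase_subset _ _).trans hSA, ?_⟩,
    insert_erase hi⟩
  intro j hji hj
  obtain rfl : j = i := le_antisymm hji (hmin j (mem_of_mem_erase hj))
  exact notMem_erase _ _ hj

lemma sum_powerset_inter_image_nonempty [Fintype ι] {M : Type*} [AddCommMonoid M]
    (g : Finset α → M) (hu : Function.Injective u) (huA : ∀ i, u i ∈ A) :
    ∑ S ∈ A.powerset with (S ∩ univ.image u).Nonempty, g S =
      ∑ i, ∑ T ∈ (tailSet A u i).powerset, g (insert (u i) T) := by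
  rw [sum_sigma']
  refine (sum_nbij (fun x : (_ : ι) × Finset α => insert (u x.1) x.2) ?_
    (injOn_insert_powerset_tailSet hu) ?_ fun _ _ => rfl).symm
  · rintro ⟨i, T⟩ hT
    have hTA : T ⊆ A := (subset_tailSet_iff.1 (mem_powerset.1 (mem_sigma.1 hT).2)).1
    exact mem_filter.2 ⟨mem_powerset.2 (insert_subset (huA i) hTA), u i,
      mem_inter.2 ⟨mem_insert_self _ _, mem_image_of_mem u (mem_univ i)⟩⟩
  · intro S hS
    obtain ⟨hSA, hSU⟩ := mem_filter.1 hS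
    obtain ⟨i, T, hT, rfl⟩ := exists_insert_eq_of_inter_image_nonempty (mem_powerset.1 hSA) hSU
    exact ⟨⟨i, T⟩, by simpa using hT, rfl⟩

end TailSet

/-- The size of a subfile delivered to a group of `c` out of `K` active users: the part of a file
of size `f` and cache fraction `x` that is cached by exactly `c - 1` given active users.
The exponents match the summand of `R_MCCS`; they have this meaning for `1 ≤ c ≤ K`. -/
def subfileSize (K c : ℕ) (x f : ℝ) : ℝ :=
  x ^ (c - 1) * (1 - x) ^ (K - c + 1) * f

lemma subfileSize_succ {K s : ℕ} (hs : s < K) (x f : ℝ) :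
    subfileSize K (s + 1) x f = x ^ s * (1 - x) ^ (K - s) * f := by
  rw [subfileSize, Nat.add_sub_cancel, show K - (s + 1) + 1 = K - s by omega]

lemma sum_choose_mul_eq_sum_subfileSize {α : Type*} [DecidableEq α] {A : Finset α} {m : ℕ}
    {u : Fin m → α} (hu : Function.Injective u) (huA : ∀ i, u i ∈ A) (i : Fin m) (x f : ℝ) :
    ∑ s ∈ range #A, ((#A - (i + 1)).choose s : ℝ) * x ^ s * (1 - x) ^ (#A - s) * f =
      ∑ T ∈ (tailSet A u i).powerset, subfileSize #A #(insert (u i) T) x f := by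
  rw [sum_powerset_tailSet_apply_card_insert (fun c => subfileSize #A c x f) hu huA]
  refine sum_congr rfl fun s hs => ?_
  rw [subfileSize_succ (mem_range.1 hs), nsmul_eq_mul]
  ring

theorem lb_le_rate_general {α : Type*} [DecidableEq α] {N : ℕ} (A U : Finset α)
    (d : α → Fin N) (q F : Fin N → ℝ) (hU : IsLeaderGroup A U d) :
    R_lb #A (A.image d) q F ≤ R_MCCS A U d q F := by
  obtain ⟨hUA, hd, hUD⟩ := hU
  have : Nonempty (Fin #(A.image d) ≃ {x // x ∈ A.image d}) := ⟨(A.image d).equivFin.symm⟩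
  refine ciSup_le fun π => ?_
  obtain ⟨u, hu, rfl, hdu⟩ := exists_injective_enumeration_of_injOn hd hUD π
  have huA : ∀ i, u i ∈ A := fun i => hUA (mem_image_of_mem u (mem_univ i))
  let size (S : Finset α) (k : α) : ℝ := subfileSize #A #S (q (d k)) (F (d k))
  rw [sum_comm]
  calc
    _ = ∑ i, ∑ T ∈ (tailSet A u i).powerset, size (insert (u i) T) (u i) :=
      sum_congr rfl fun i _ => by
        simp only [size, hdu, sum_choose_mul_eq_sum_subfileSize hu huA]
    _ ≤ ∑ i, ∑ T ∈ (tailSet A u i).powerset,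
          maxOver (insert (u i) T) (size (insert (u i) T)) :=
      sum_le_sum fun i _ => sum_le_sum fun T _ => le_maxOver _ (mem_insert_self _ _)
    _ = R_MCCS A (univ.image u) d q F :=
      (sum_powerset_inter_image_nonempty (fun S => maxOver S (size S)) hu huA).symm

/-- For every cache placement vector `q ∈ [0,1]^N`, every collection of nonnegative
file sizes, every finite active set `A` with demand map `d`, and every leader group
`U` for `(A, d)`, the D-MCCS delivery rate is at least the lower-bound rate with
`D = {d_k : k ∈ A}`. -/
theorem lb_le_rate {α : Type*} [DecidableEq α] {N : ℕ}
    (A U : Finset α) (d : α → Fin N) (q F : Fin N → ℝ)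
    (hq : ∀ n, q n ∈ Set.Icc (0 : ℝ) 1) (hF : ∀ n, 0 ≤ F n)
    (hU : IsLeaderGroup A U d) :
    R_lb A.card (A.image d) q F ≤ R_MCCS A U d q F :=
  lb_le_rate_general A U d q F hU
end
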